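/- arXiv:1607.06294 — 2 statements merged into one kernel-verified Lean document; each statement's English description precedes it below -/
import Mathlib

section
/- Let (X, A_X) be an arbitrary network with n ≥ 2 nodes, let β = mlc(X, A_X) be its minimum loop cost, and let α be any constant with 0 < α ≤ sep(X, A_X). Then there exists a bijective map φ : X → {1,…,n} that is dissimilarity reducing into the canonical network Δ_n(α,β) = ({1,…,n}, A_{n,α,β}): A_X(x, x') ≥ A_{n,α,β}(φ(x), φ(x')) for all x, x' ∈ X, where A_{n,α,β}(i,j) = α for i > j, A_{n,α,β}(i,j) = β for i < j, and A_{n,α,β}(i,i) = 0. -/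
noncomputable section

/-- A dissimilarity function on a node set: nonnegative and zero exactly on the diagonal.
It need not be symmetric nor satisfy the triangle inequality. -/
def IsDissim {X : Type} (A : X → X → ℝ) : Prop :=
  (∀ x x', 0 ≤ A x x') ∧ (∀ x x', A x x' = 0 ↔ x = x')

/-- A symmetric dissimilarity. -/
def IsSym {X : Type} (A : X → X → ℝ) : Prop := ∀ x x', A x x' = A x' x

/-- An ultrametric: nonnegative, zero exactly on the diagonal, symmetric, and
satisfying the strong triangle inequality. -/
def IsUltrametric {X : Type} (u : X → X → ℝ) : Prop :=
  (∀ x x', 0 ≤ u x x') ∧ (∀ x x', u x x' = 0 ↔ x = x') ∧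
    (∀ x x', u x x' = u x' x) ∧
    (∀ x x' x'', u x x'' ≤ max (u x x') (u x' x''))

/-- The cost of the chain `x :: l`: the maximum dissimilarity over consecutive links. -/
def chainCost {X : Type} (A : X → X → ℝ) : X → List X → ℝ
  | _, [] => 0
  | x, y :: l => max (A x y) (chainCost A y l)

/-- The set of costs of chains from `x` to `x'`. -/
def chainCosts {X : Type} (A : X → X → ℝ) (x x' : X) : Set ℝ :=
  {c | ∃ l : List X, (x :: l).getLast (List.cons_ne_nil x l) = x' ∧ chainCost A x l = c}

/-- The directed minimum chain cost `ũ*_X(x,x')`: minimum cost over all chains from `x` to `x'`. -/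
def minChainCost {X : Type} (A : X → X → ℝ) (x x' : X) : ℝ :=
  sInf (chainCosts A x x')

/-- The nonreciprocal ultrametric `u^NR`. -/
def nonrecipUltra {X : Type} (A : X → X → ℝ) (x x' : X) : ℝ :=
  max (minChainCost A x x') (minChainCost A x' x)

/-- The reciprocal ultrametric `u^R`. -/
def recipUltra {X : Type} (A : X → X → ℝ) (x x' : X) : ℝ :=
  minChainCost (fun a b => max (A a b) (A b a)) x x'

/-- The unilateral ultrametric `u^U`. -/
def uniUltra {X : Type} (A : X → X → ℝ) (x x' : X) : ℝ :=
  minChainCost (fun a b => min (A a b) (A b a)) x x'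

/-- The minimum loop cost `mlc(X, A_X)`: minimum cost over loops, i.e. chains from some
node `x` back to itself containing at least one node different from `x`. -/
def mlc {X : Type} (A : X → X → ℝ) : ℝ :=
  sInf {c | ∃ (x : X) (l : List X),
    (x :: l).getLast (List.cons_ne_nil x l) = x ∧ (∃ y ∈ l, y ≠ x) ∧ chainCost A x l = c}

/-- The separation `sep(X, A_X)`: minimum dissimilarity over pairs of distinct nodes. -/
def sep {X : Type} (A : X → X → ℝ) : ℝ :=
  sInf {c | ∃ x x' : X, x ≠ x' ∧ A x x' = c}

/-- A hierarchical clustering method: assigns to every (finite) network an output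
two-variable function on the same node set. -/
abbrev HCMethod := ∀ (X : Type) [Fintype X], (X → X → ℝ) → X → X → ℝ

/-- A hierarchical clustering method outputs an ultrametric on every network. -/
def IsHCMethod (H : HCMethod) : Prop :=
  ∀ (X : Type) [Fintype X] (A : X → X → ℝ), IsDissim A → IsUltrametric (H X A)

/-- `p, q` are the two (distinct) nodes of a two-node set. -/
def TwoNode {X : Type} (p q : X) : Prop := p ≠ q ∧ ∀ x : X, x = p ∨ x = q

/-- Axiom of Value (A1): on every two-node network the output clusters the two nodes at
the maximum of the two dissimilarities. -/
def AxiomValue (H : HCMethod) : Prop :=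
  ∀ (X : Type) [Fintype X] (p q : X), TwoNode p q →
    ∀ A : X → X → ℝ, IsDissim A → H X A p q = max (A p q) (A q p)

/-- Axiom of Transformation (A2): dissimilarity-reducing maps do not increase output values. -/
def AxiomTransform (H : HCMethod) : Prop :=
  ∀ (X Y : Type) [Fintype X] [Fintype Y] (AX : X → X → ℝ) (AY : Y → Y → ℝ),
    IsDissim AX → IsDissim AY →
    ∀ φ : X → Y, (∀ x x', AY (φ x) (φ x') ≤ AX x x') →
    ∀ x x' : X, H Y AY (φ x) (φ x') ≤ H X AX x x'

/-- The canonical dissimilarity `A_{n,α,β}` on `Fin n`: `α` for `i > j`, `β` for `i < j`,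
`0` on the diagonal. -/
def canonDissim (n : ℕ) (α β : ℝ) : Fin n → Fin n → ℝ :=
  fun i j => if i = j then 0 else if j < i then α else β

/-- Extended Axiom of Value (A1'): on every permuted canonical network `Δ_n(α,β,Π)` the
output ultrametric equals `max(α,β)` off the diagonal. -/
def ExtAxiomValue (H : HCMethod) : Prop :=
  ∀ (n : ℕ) (α β : ℝ), 0 < α → 0 < β → ∀ π : Equiv.Perm (Fin n),
    ∀ i j : Fin n, i ≠ j →
      H (Fin n) (fun i j => canonDissim n α β (π i) (π j)) i j = max α β

/-- Alternative Axiom of Value (A1''): on every two-node network the output clusters the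
two nodes at the minimum of the two dissimilarities. -/
def AltAxiomValue (H : HCMethod) : Prop :=
  ∀ (X : Type) [Fintype X] (p q : X), TwoNode p q →
    ∀ A : X → X → ℝ, IsDissim A → H X A p q = min (A p q) (A q p)

/-- Agnostic Axiom of Value (A1'''): on every two-node network the output value lies
between the minimum and maximum of the two dissimilarities. -/
def AgnAxiomValue (H : HCMethod) : Prop :=
  ∀ (X : Type) [Fintype X] (p q : X), TwoNode p q →
    ∀ A : X → X → ℝ, IsDissim A →
      min (A p q) (A q p) ≤ H X A p q ∧ H X A p q ≤ max (A p q) (A q p)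

theorem chainCost_nonneg_aux {X : Type} (A : X → X → ℝ) (x : X) (l : List X) :
    0 ≤ chainCost A x l := by
  induction l generalizing x with
  | nil => simp [chainCost]
  | cons y l ih => exact le_trans (ih y) (le_max_right _ _)

theorem chain_of_reach_aux {X : Type} (A : X → X → ℝ) (β : ℝ) {x y : X}
    (h : Relation.ReflTransGen (fun a b => A a b < β) x y)
    (l : List X) (hl : chainCost A y l < β) :
    ∃ l' : List X, y ∈ x :: l' ∧ (∀ z ∈ l, z ∈ l') ∧
      (x :: l').getLast (List.cons_ne_nil x l') = (y :: l).getLast (List.cons_ne_nil y l) ∧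
      chainCost A x l' < β := by
  induction h using Relation.ReflTransGen.head_induction_on with
  | refl => exact ⟨l, by simp, fun _ h => h, rfl, hl⟩
  | head hab hby ih =>
    rename_i a b
    obtain ⟨l', h1, h2, h3, h4⟩ := ih
    refine ⟨b :: l', List.mem_cons_of_mem _ h1, fun z hz => List.mem_cons_of_mem _ (h2 z hz),
      ?_, max_lt hab h4⟩
    rw [List.getLast_cons (List.cons_ne_nil b l')]
    exact h3

theorem reach_antisymm_aux {X : Type} (A : X → X → ℝ) (hA : IsDissim A) {x y : X}
    (h1 : Relation.ReflTransGen (fun a b => A a b < mlc A) x y)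
    (h2 : Relation.ReflTransGen (fun a b => A a b < mlc A) y x) : x = y := by
  by_contra hne
  have hpos : 0 < mlc A := by
    rcases Relation.ReflTransGen.cases_head h1 with h | ⟨c, hc, _⟩
    · exact absurd h hne
    · exact lt_of_le_of_lt (hA.1 _ _) hc
  obtain ⟨l, _, _, hlast, hc⟩ := chain_of_reach_aux A _ h2 [] (by simpa [chainCost] using hpos)
  obtain ⟨l', hy, _, hlast', hc'⟩ := chain_of_reach_aux A _ h1 l hc
  have hmem : y ∈ l' := by
    rcases List.mem_cons.1 hy with h | h
    · exact absurd h.symm hne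
    · exact h
  have hle : mlc A ≤ chainCost A x l' := by
    apply csInf_le
    · refine ⟨0, ?_⟩
      rintro c ⟨z, m, _, _, rfl⟩
      exact chainCost_nonneg_aux A z m
    · exact ⟨x, l', by rw [hlast', hlast]; rfl, ⟨y, hmem, fun h => hne h.symm⟩, rfl⟩
  exact absurd hc' (not_lt.2 hle)

/-- Every network with `n ≥ 2` nodes admits a bijective dissimilarity-reducing
map into the canonical network `Δ_n(α, β)` with `β = mlc(X, A_X)` and `0 < α ≤ sep(X, A_X)`. -/
theorem exists_bijective_dissimilarity_reducing_to_canonical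
    (X : Type) [Fintype X] (A : X → X → ℝ) (hA : IsDissim A)
    (hn : 2 ≤ Fintype.card X)
    (α : ℝ) (hα : 0 < α) (hαsep : α ≤ sep A) :
    ∃ φ : X → Fin (Fintype.card X), Function.Bijective φ ∧
      ∀ x x' : X, canonDissim (Fintype.card X) α (mlc A) (φ x) (φ x') ≤ A x x' := by
  classical
  let r : X → X → Prop := fun a b => Relation.ReflTransGen (fun a b => A a b < mlc A) b a
  have hr : IsPartialOrder X r :=
    { refl := fun a => Relation.ReflTransGen.refl
      trans := fun a b c hab hbc => Relation.ReflTransGen.trans hbc hab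
      antisymm := fun a b hab hba => reach_antisymm_aux A hA hba hab }
  obtain ⟨s, hs, hrs⟩ := extend_partialOrder r
  letI : LinearOrder X :=
    { le := s
      le_refl := hs.refl
      le_trans := hs.trans
      le_antisymm := hs.antisymm
      le_total := hs.total
      toDecidableLE := Classical.decRel s }
  let e : X ≃o Fin (Fintype.card X) := (Fintype.orderIsoFinOfCardEq X rfl).symm
  refine ⟨e, e.bijective, fun x x' => ?_⟩
  unfold canonDissim
  split_ifs with h1 h2
  · exact hA.1 _ _
  · refine hαsep.trans (csInf_le ⟨0, ?_⟩ ⟨x, x', fun h => h1 (by rw [h]), rfl⟩)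
    rintro c ⟨a, b, _, rfl⟩
    exact hA.1 _ _
  · by_contra hlt
    have hle : x' ≤ x := hrs _ _ (Relation.ReflTransGen.single (not_le.1 hlt))
    have hle' : e x' ≤ e x := e.monotone hle
    exact h2 (lt_of_le_of_ne hle' (fun h => h1 h.symm))
end
end

section
/- Let (X, A_X) be a network, δ > 0, and let Z be the set of equivalence classes of X under the relation x ∼ x' iff u^NR_X(x,x') ≤ δ, where u^NR_X is the nonreciprocal ultrametric. Endow Z with the dissimilarity A_Z(z,z') = min over x in the class z and x' in the class z' of A_X(x,x') for z ≠ z', and A_Z(z,z) = 0. If Z has at least two elements, then the minimum loop cost of the quotient network satisfies mlc(Z, A_Z) > δ. -/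
noncomputable section

theorem chainCost_mem {X : Type} (A : X → X → ℝ) (l : List X) (x : X) :
    chainCost A x l ∈ insert 0 (Set.range fun p : X × X => A p.1 p.2) := by
  induction l generalizing x with
  | nil => simp [chainCost]
  | cons y l ih =>
    simp only [chainCost]
    rcases max_choice (A x y) (chainCost A y l) with h | h
    · rw [h]; exact Or.inr ⟨(x, y), rfl⟩
    · rw [h]; exact ih y

theorem chainCost_nonneg {X : Type} (A : X → X → ℝ) (l : List X) (x : X) :
    0 ≤ chainCost A x l := by
  induction l generalizing x with
  | nil => simp [chainCost]
  | cons y l ih => exact le_trans (ih y) (le_max_right _ _)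

theorem chain_reach {X : Type} (A : X → X → ℝ) (δ : ℝ) (l : List X) (x : X)
    (h : chainCost A x l ≤ δ) (y : X) (hy : y ∈ x :: l) :
    Relation.ReflTransGen (fun a b => A a b ≤ δ) x y ∧
    Relation.ReflTransGen (fun a b => A a b ≤ δ) y
      ((x :: l).getLast (List.cons_ne_nil x l)) := by
  induction l generalizing x y with
  | nil =>
    simp only [List.mem_singleton] at hy
    subst hy
    exact ⟨.refl, .refl⟩
  | cons w l ih =>
    simp only [chainCost, max_le_iff] at h
    rw [List.getLast_cons (List.cons_ne_nil w l)]
    rcases List.mem_cons.1 hy with rfl | hy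
    · exact ⟨.refl, .head h.1 (ih w h.2 w List.mem_cons_self).2⟩
    · exact ⟨.head h.1 (ih w h.2 y hy).1, (ih w h.2 y hy).2⟩

theorem reach_chain {X : Type} (A : X → X → ℝ) (δ : ℝ) (hδ : 0 < δ) (x y : X)
    (h : Relation.ReflTransGen (fun a b => A a b ≤ δ) x y) :
    ∃ l : List X, (x :: l).getLast (List.cons_ne_nil x l) = y ∧ chainCost A x l ≤ δ := by
  induction h using Relation.ReflTransGen.head_induction_on with
  | refl => exact ⟨[], rfl, hδ.le⟩
  | head h _ ih =>
    obtain ⟨l, h1, h2⟩ := ih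
    exact ⟨_ :: l, by rw [List.getLast_cons (List.cons_ne_nil _ l)]; exact h1, max_le h h2⟩

theorem minChainCost_le_iff {X : Type} [Finite X] (A : X → X → ℝ) (δ : ℝ) (hδ : 0 < δ)
    (x y : X) : minChainCost A x y ≤ δ ↔
      Relation.ReflTransGen (fun a b => A a b ≤ δ) x y := by
  constructor
  · intro h
    have hfin : (chainCosts A x y).Finite := by
      refine ((Set.finite_range fun p : X × X => A p.1 p.2).insert 0).subset ?_
      rintro c ⟨l, -, rfl⟩
      exact chainCost_mem A l x
    have hne : (chainCosts A x y).Nonempty := ⟨_, [y], rfl, rfl⟩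
    obtain ⟨l, h1, h2⟩ := hne.csInf_mem hfin
    have := (chain_reach A δ l x (h2.trans_le h) x List.mem_cons_self).2
    rwa [h1] at this
  · intro h
    obtain ⟨l, h1, h2⟩ := reach_chain A δ hδ x y h
    have hm : chainCost A x l ∈ chainCosts A x y := ⟨l, h1, rfl⟩
    refine (csInf_le ⟨0, ?_⟩ hm).trans h2
    rintro c ⟨l, -, rfl⟩
    exact chainCost_nonneg A l x

/-- The quotient network of nonreciprocal equivalence classes at resolution `δ`
has minimum loop cost greater than `δ`. -/
theorem quotient_mlc_gt_delta
    (X : Type) [Fintype X] (A : X → X → ℝ) (hA : IsDissim A)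
    (δ : ℝ) (hδ : 0 < δ) (s : Setoid X)
    (hs : ∀ x x' : X, s.r x x' ↔ nonrecipUltra A x x' ≤ δ)
    (AZ : Quotient s → Quotient s → ℝ)
    (hAZ : ∀ z z' : Quotient s, z ≠ z' →
      AZ z z' = sInf {c | ∃ x x' : X,
        Quotient.mk s x = z ∧ Quotient.mk s x' = z' ∧ A x x' = c})
    (hAZ0 : ∀ z : Quotient s, AZ z z = 0)
    (hZ : ∃ z z' : Quotient s, z ≠ z') :
    δ < mlc AZ := by
  have hs' : ∀ x x' : X, Quotient.mk s x = Quotient.mk s x' ↔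
      Relation.ReflTransGen (fun a b => A a b ≤ δ) x x' ∧
      Relation.ReflTransGen (fun a b => A a b ≤ δ) x' x := by
    intro x x'
    rw [← minChainCost_le_iff A δ hδ, ← minChainCost_le_iff A δ hδ, ← max_le_iff]
    exact Quotient.eq.trans (hs x x')
  have step : ∀ x y : X, AZ (Quotient.mk s x) (Quotient.mk s y) ≤ δ →
      Relation.ReflTransGen (fun a b => A a b ≤ δ) x y := by
    intro x y h
    by_cases hxy : Quotient.mk s x = Quotient.mk s y
    · exact ((hs' x y).1 hxy).1
    · rw [hAZ _ _ hxy] at h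
      have hfin : {c | ∃ a b : X, Quotient.mk s a = Quotient.mk s x ∧
          Quotient.mk s b = Quotient.mk s y ∧ A a b = c}.Finite := by
        refine (Set.finite_range fun p : X × X => A p.1 p.2).subset ?_
        rintro c ⟨a, b, -, -, rfl⟩
        exact ⟨(a, b), rfl⟩
      have hne : {c | ∃ a b : X, Quotient.mk s a = Quotient.mk s x ∧
          Quotient.mk s b = Quotient.mk s y ∧ A a b = c}.Nonempty := ⟨_, x, y, rfl, rfl, rfl⟩
      obtain ⟨a, b, ha, hb, hab⟩ := hne.csInf_mem hfin
      have hab' : A a b ≤ δ := hab.trans_le h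
      exact (((hs' a x).1 ha).2.tail hab').trans ((hs' b y).1 hb).1
  have lift : ∀ z w : Quotient s, Relation.ReflTransGen (fun a b => AZ a b ≤ δ) z w →
      ∀ x y : X, Quotient.mk s x = z → Quotient.mk s y = w →
      Relation.ReflTransGen (fun a b => A a b ≤ δ) x y := by
    intro z w h
    induction h with
    | refl =>
      intro x y hx hy
      exact ((hs' x y).1 (hx.trans hy.symm)).1
    | @tail b c _ hbc ih =>
      intro x y hx hy
      obtain ⟨v, hv⟩ := Quotient.exists_rep b
      refine (ih x v hx hv).trans (step v y ?_)
      have hv' : Quotient.mk s v = b := hv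
      rw [hv', hy]
      exact hbc
  by_contra hcon
  rw [not_lt] at hcon
  have : Finite (Quotient s) := Quotient.finite s
  unfold mlc at hcon
  have hne : {c | ∃ (x : Quotient s) (l : List (Quotient s)),
      (x :: l).getLast (List.cons_ne_nil x l) = x ∧ (∃ y ∈ l, y ≠ x) ∧
        chainCost AZ x l = c}.Nonempty := by
    obtain ⟨z, z', hz⟩ := hZ
    exact ⟨_, z, [z', z], rfl, ⟨z', by simp, hz.symm⟩, rfl⟩
  have hfin : {c | ∃ (x : Quotient s) (l : List (Quotient s)),
      (x :: l).getLast (List.cons_ne_nil x l) = x ∧ (∃ y ∈ l, y ≠ x) ∧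
        chainCost AZ x l = c}.Finite := by
    refine ((Set.finite_range fun p : Quotient s × Quotient s => AZ p.1 p.2).insert 0).subset ?_
    rintro c ⟨z, l, -, -, rfl⟩
    exact chainCost_mem AZ l z
  obtain ⟨z, l, hl, ⟨w, hw, hwz⟩, hc⟩ := hne.csInf_mem hfin
  obtain ⟨h1, h2⟩ := chain_reach AZ δ l z (hc.trans_le hcon) w (List.mem_cons_of_mem _ hw)
  rw [hl] at h2
  obtain ⟨x, hx⟩ := Quotient.exists_rep z
  obtain ⟨y, hy⟩ := Quotient.exists_rep w
  apply hwz
  rw [← hx, ← hy]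
  exact (hs' y x).2 ⟨lift _ _ h2 y x hy hx, lift _ _ h1 x y hx hy⟩
end
end
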